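/- Let f(n) ≥ 0 with ∑_{n≥1} f(n) < ∞, let λ_n be nonnegative reals, and F(x) = ∑_{n≥1} f(n) e^{2πi λ_n x}. For any Λ > 0, Y ≥ 1, β ∈ ℝ, and x ∈ ℝ: max_{|u| ≤ Y/2} |Re(e^{iβ} F(x+u))| ≥ (1/2) Re(F₁(x)) - 4F(0)/(π² Y Λ), where F₁(x) = ∑_{n≥1} f(n) e^{2πi λ_n x} max(0, 1 - |Λ - λ_n|/Λ). -/

import Mathlib

set_option autoImplicit false

open Real MeasureTheory

/-!
Average `Re (e^{iβ} F(x + u))` against the Fejér kernel `Λ K(Λu)` modulated by `e^{-2πiΛu}`, and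
split `Re z = (z + conj z) / 2`. Integration multiplies each coefficient by the Fourier transform
of the kernel, a tent on `[-Λ, Λ]`, at the frequency shifted by `-Λ`: the half coming from `z`
becomes `e^{iβ} F₁(x) / 2`, while in the conjugate half the frequencies `-λₙ - Λ ≤ -Λ` fall outside
the tent, so that it vanishes. Since the kernel has mass `1`, the modulus of the average is at most
the maximum over `|u| ≤ Y / 2` plus `F(0)` times the mass of the tail, and the decay
`Λ K(Λu) ≤ 1 / (π² Λ u²)` bounds that mass. The tent is a convolution square of an indicator
function, which identifies its Fourier transform with the Fejér kernel.
-/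

open scoped FourierTransform Convolution ComplexConjugate

lemma setIntegral_compl_Icc_neg_of_even {f : ℝ → ℝ} (hf : f.Even) {c : ℝ} (hc : 0 ≤ c) :
    ∫ x in (Set.Icc (-c) c)ᶜ, f x = 2 * ∫ x in Set.Ioi c, f x := by
  have h : (Set.Icc (-c) c)ᶜ.indicator f = fun x => (Set.Ioi c).indicator f |x| := by
    ext x
    have hfabs : f |x| = f x := by rcases abs_choice x with h | h <;> simp [h, hf x]
    simp only [Set.indicator_apply, Set.mem_compl_iff, Set.mem_Icc, ← abs_le, not_le, Set.mem_Ioi,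
      hfabs]
  rw [← integral_indicator measurableSet_Icc.compl, h, integral_comp_abs,
    setIntegral_indicator measurableSet_Ioi, Set.inter_eq_right.mpr (Set.Ioi_subset_Ioi hc)]

lemma norm_integral_smul_le_mul_add_mul_setIntegral_compl {α E : Type*} [MeasurableSpace α]
    {μ : Measure α} [NormedAddCommGroup E] [NormedSpace ℝ E] {φ : α → E} {k : α → ℝ}
    (hk : Integrable k μ) (hk₀ : ∀ u, 0 ≤ k u) {s : Set α} (hs : MeasurableSet s) {M S : ℝ}
    (hM : 0 ≤ M) (hφM : ∀ u ∈ s, ‖φ u‖ ≤ M) (hφS : ∀ u ∉ s, ‖φ u‖ ≤ S) :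
    ‖∫ u, k u • φ u ∂μ‖ ≤ (∫ u, k u ∂μ) * M + (∫ u in sᶜ, k u ∂μ) * S := by
  have hb : ∀ u, ‖k u • φ u‖ ≤ k u * M + sᶜ.indicator k u * S := fun u => by
    rw [norm_smul, norm_of_nonneg (hk₀ u)]
    by_cases hu : u ∈ s
    · simpa [hu] using mul_le_mul_of_nonneg_left (hφM u hu) (hk₀ u)
    · simpa [hu] using (mul_le_mul_of_nonneg_left (hφS u hu) (hk₀ u)).trans
        (le_add_of_nonneg_left (mul_nonneg (hk₀ u) hM))
  have hi : Integrable (sᶜ.indicator k) μ := hk.indicator hs.compl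
  refine (norm_integral_le_of_norm_le ((hk.mul_const M).add (hi.mul_const S))
    (ae_of_all _ hb)).trans_eq ?_
  rw [integral_add' (hk.mul_const M) (hi.mul_const S), integral_mul_const, integral_mul_const,
    integral_indicator hs.compl]

lemma fourier_const_smul {V E : Type*} [NormedAddCommGroup V] [InnerProductSpace ℝ V]
    [MeasurableSpace V] [BorelSpace V] [FiniteDimensional ℝ V] [NormedAddCommGroup E]
    [NormedSpace ℂ E] (r : ℂ) (f : V → E) : 𝓕 (r • f) = r • 𝓕 f :=
  VectorFourier.fourierIntegral_const_smul _ _ _ _ _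

lemma integrable_mul_fourierChar {k : ℝ → ℂ} (hk : Integrable k) (ξ : ℝ) :
    Integrable fun u => k u * 𝐞 (ξ * u) :=
  hk.mul_bdd (c := 1) (by fun_prop) (by simp [Circle.norm_coe])

lemma integrable_indicator_Icc_one (a b : ℝ) :
    Integrable ((Set.Icc a b).indicator (1 : ℝ → ℂ)) :=
  (integrable_indicator_iff measurableSet_Icc).mpr (integrableOn_const (by simp))

lemma fourier_indicator_Icc {r : ℝ} (hr : 0 ≤ r) (u : ℝ) :
    𝓕 ((Set.Icc (-r) r).indicator (1 : ℝ → ℂ)) u = (2 * r * sinc (2 * π * u * r) : ℝ) := by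
  set c : ℝ := -2 * π * u with hc
  have h : 𝓕 ((Set.Icc (-r) r).indicator (1 : ℝ → ℂ)) u
      = ∫ v in -r..r, Complex.exp (((c * v : ℝ) : ℂ) * Complex.I) := by
    rw [intervalIntegral.integral_of_le (by linarith), ← integral_Icc_eq_integral_Ioc,
      ← integral_indicator measurableSet_Icc, Real.fourier_real_eq_integral_exp_smul]
    congr with v
    by_cases hv : v ∈ Set.Icc (-r) r <;> simp [hv, hc, mul_right_comm]
  rcases eq_or_ne u 0 with rfl | hu
  · simp [h, hc, two_mul]
  · have hc₀ : c ≠ 0 := by simp [hc, hu, pi_ne_zero]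
    have hsinc : sinc (2 * π * u * r) = sinc (c * r) := by
      rw [← sinc_neg]
      congr 1
      ring
    rw [h, intervalIntegral.integral_comp_mul_left
      (fun t : ℝ => Complex.exp ((t : ℂ) * Complex.I)) hc₀, mul_neg,
      integral_exp_mul_I_eq_sinc, hsinc, Complex.real_smul]
    have hc' : (c : ℂ) ≠ 0 := Complex.ofReal_ne_zero.mpr hc₀
    push_cast
    field_simp

lemma indicator_Icc_mul_indicator_Icc_sub (r t s : ℝ) :
    (Set.Icc (-r) r).indicator (1 : ℝ → ℂ) s * (Set.Icc (-r) r).indicator (1 : ℝ → ℂ) (t - s)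
      = (Set.Icc (max (-r) (t - r)) (min r (t + r))).indicator 1 s := by
  have hmem : t - s ∈ Set.Icc (-r) r ↔ s ∈ Set.Icc (t - r) (t + r) := by
    simp only [Set.mem_Icc]
    constructor <;> rintro ⟨h₁, h₂⟩ <;> constructor <;> linarith
  rw [← Set.Icc_inter_Icc, Set.inter_indicator_one, Pi.mul_apply]
  simp only [Set.indicator_apply, hmem, Pi.one_apply]

lemma convolution_indicator_Icc (r t : ℝ) :
    ((Set.Icc (-r) r).indicator (1 : ℝ → ℂ) ⋆[ContinuousLinearMap.mul ℂ ℂ]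
      (Set.Icc (-r) r).indicator (1 : ℝ → ℂ)) t = (max 0 (2 * r - |t|) : ℝ) := by
  have hlength : min r (t + r) - max (-r) (t - r) = 2 * r - |t| := by
    rcases le_total 0 t with ht | ht
    · rw [min_eq_left (by linarith), max_eq_right (by linarith), abs_of_nonneg ht]
      ring
    · rw [min_eq_right (by linarith), max_eq_left (by linarith), abs_of_nonpos ht]
      ring
  simp only [convolution_def, ContinuousLinearMap.mul_apply', indicator_Icc_mul_indicator_Icc_sub]
  rw [integral_indicator measurableSet_Icc]
  simp only [Pi.one_apply, setIntegral_const, Real.volume_real_Icc, hlength, max_comm _ (0 : ℝ),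
    Complex.real_smul, mul_one]

section FejerKernel

variable {Λ : ℝ}

/-- The Fejér kernel `Λ K(Λu)`, where `K(u) = (sin (πu) / (πu))²`; the use of `sinc` supplies the
value `K(0) = 1`. -/
noncomputable def fejerKernel (Λ u : ℝ) : ℝ := Λ * sinc (π * (Λ * u)) ^ 2

/-- The tent function of height `1` supported on `[-Λ, Λ]`: the Fourier transform of
`fejerKernel Λ`. -/
noncomputable def tent (Λ ξ : ℝ) : ℝ := max 0 (1 - |ξ| / Λ)

lemma tent_of_le_abs (hΛ : 0 < Λ) {ξ : ℝ} (hξ : Λ ≤ |ξ|) : tent Λ ξ = 0 :=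
  max_eq_left (sub_nonpos.mpr ((one_le_div hΛ).mpr hξ))

lemma fejerKernel_nonneg (hΛ : 0 ≤ Λ) (u : ℝ) : 0 ≤ fejerKernel Λ u := by
  unfold fejerKernel
  positivity

lemma fejerKernel_le (hΛ : 0 ≤ Λ) (u : ℝ) : fejerKernel Λ u ≤ Λ :=
  mul_le_of_le_one_right hΛ ((sq_le_one_iff_abs_le_one _).mpr (abs_sinc_le_one _))

lemma even_fejerKernel : (fejerKernel Λ).Even := fun u => by
  simp [fejerKernel]

lemma fejerKernel_mul_sq_le (hΛ : 0 < Λ) (u : ℝ) :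
    fejerKernel Λ u * u ^ 2 ≤ 1 / (π ^ 2 * Λ) := by
  rcases eq_or_ne u 0 with rfl | hu
  · simpa using by positivity
  · calc fejerKernel Λ u * u ^ 2 = sin (π * (Λ * u)) ^ 2 / (π ^ 2 * Λ) := by
          rw [fejerKernel, sinc_of_ne_zero (by positivity)]
          field_simp
      _ ≤ 1 / (π ^ 2 * Λ) := by
          gcongr
          exact sin_sq_le_one _

lemma continuous_fejerKernel : Continuous (fejerKernel Λ) := by
  unfold fejerKernel
  fun_prop

lemma integrable_fejerKernel (hΛ : 0 < Λ) : Integrable (fejerKernel Λ) := by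
  refine (integrable_inv_one_add_sq.const_mul (Λ + 1 / (π ^ 2 * Λ))).mono'
    continuous_fejerKernel.aestronglyMeasurable (ae_of_all _ fun u => ?_)
  rw [norm_of_nonneg (fejerKernel_nonneg hΛ.le u), ← div_eq_mul_inv, le_div_iff₀ (by positivity),
    mul_add, mul_one]
  exact add_le_add (fejerKernel_le hΛ.le u) (fejerKernel_mul_sq_le hΛ u)

lemma tent_eq_convolution (hΛ : 0 < Λ) :
    (fun ξ => (tent Λ ξ : ℂ)) = (Λ : ℂ)⁻¹ •
      ((Set.Icc (-(Λ / 2)) (Λ / 2)).indicator (1 : ℝ → ℂ) ⋆[ContinuousLinearMap.mul ℂ ℂ]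
        (Set.Icc (-(Λ / 2)) (Λ / 2)).indicator (1 : ℝ → ℂ)) := by
  ext ξ
  rw [Pi.smul_apply, convolution_indicator_Icc, smul_eq_mul, ← Complex.ofReal_inv,
    ← Complex.ofReal_mul, mul_max_of_nonneg _ _ (by positivity), mul_zero, tent]
  congr 2
  field_simp

lemma continuous_tent : Continuous (tent Λ) := by
  unfold tent
  fun_prop

lemma integrable_tent (hΛ : 0 < Λ) : Integrable fun ξ => (tent Λ ξ : ℂ) := by
  rw [tent_eq_convolution hΛ]
  exact ((integrable_indicator_Icc_one _ _).integrable_convolution _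
    (integrable_indicator_Icc_one _ _)).smul _

lemma fourier_tent (hΛ : 0 < Λ) :
    𝓕 (fun ξ => (tent Λ ξ : ℂ)) = fun u => (fejerKernel Λ u : ℂ) := by
  ext u
  rw [tent_eq_convolution hΛ, fourier_const_smul, Pi.smul_apply,
    Real.fourier_mul_convolution_eq (integrable_indicator_Icc_one _ _)
      (integrable_indicator_Icc_one _ _),
    fourier_indicator_Icc (by positivity), fejerKernel,
    show 2 * π * u * (Λ / 2) = π * (Λ * u) by ring, smul_eq_mul]
  push_cast
  field_simp

lemma fourierInv_fejerKernel (hΛ : 0 < Λ) (ξ : ℝ) :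
    𝓕⁻ (fun u => (fejerKernel Λ u : ℂ)) ξ = tent Λ ξ := by
  rw [← fourier_tent hΛ]
  exact (integrable_tent hΛ).fourierInv_fourier_eq
    (by rw [fourier_tent hΛ]; exact (integrable_fejerKernel hΛ).ofReal)
    (Complex.continuous_ofReal.comp continuous_tent).continuousAt

lemma integral_fejerKernel (hΛ : 0 < Λ) : ∫ u, fejerKernel Λ u = 1 := by
  have h := fourierInv_fejerKernel hΛ 0
  simp only [Real.fourierInv_eq, inner_zero_right, AddChar.map_zero_eq_one, one_smul, tent,
    abs_zero, zero_div, sub_zero, integral_complex_ofReal] at h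
  simpa using h

lemma setIntegral_fejerKernel_compl_Icc_le (hΛ : 0 < Λ) {c : ℝ} (hc : 0 < c) :
    ∫ u in (Set.Icc (-c) c)ᶜ, fejerKernel Λ u ≤ 2 / (π ^ 2 * Λ * c) := by
  have hle : ∀ u ∈ Set.Ioi c, fejerKernel Λ u ≤ 1 / (π ^ 2 * Λ) * u ^ (-2 : ℝ) := by
    intro u hu
    have hu₀ : 0 < u := hc.trans hu
    rw [rpow_neg hu₀.le, rpow_two, ← div_eq_mul_inv, le_div_iff₀ (by positivity)]
    exact fejerKernel_mul_sq_le hΛ u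
  calc ∫ u in (Set.Icc (-c) c)ᶜ, fejerKernel Λ u
      = 2 * ∫ u in Set.Ioi c, fejerKernel Λ u :=
        setIntegral_compl_Icc_neg_of_even even_fejerKernel hc.le
    _ ≤ 2 * ∫ u in Set.Ioi c, 1 / (π ^ 2 * Λ) * u ^ (-2 : ℝ) := by
        gcongr 2 * ?_
        exact setIntegral_mono_on (integrable_fejerKernel hΛ).integrableOn
          ((integrableOn_Ioi_rpow_of_lt (by norm_num) hc).const_mul _) measurableSet_Ioi hle
    _ = 2 / (π ^ 2 * Λ * c) := by
        rw [integral_const_mul, integral_Ioi_rpow_of_lt (by norm_num) hc,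
          show (-2 : ℝ) + 1 = -1 by norm_num, rpow_neg_one]
        field_simp

lemma norm_integral_fejerKernel_smul_le {E : Type*} [NormedAddCommGroup E] [NormedSpace ℝ E]
    {φ : ℝ → E} (hΛ : 0 < Λ) {c : ℝ} (hc : 0 < c) {M S : ℝ}
    (hφM : ∀ u ∈ Set.Icc (-c) c, ‖φ u‖ ≤ M) (hφS : ∀ u ∉ Set.Icc (-c) c, ‖φ u‖ ≤ S) :
    ‖∫ u, fejerKernel Λ u • φ u‖ ≤ M + 2 / (π ^ 2 * Λ * c) * S := by
  have hM : 0 ≤ M := (norm_nonneg _).trans (hφM 0 ⟨neg_nonpos.mpr hc.le, hc.le⟩)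
  have hS : 0 ≤ S := (norm_nonneg _).trans (hφS (c + 1) fun h => by linarith [h.2])
  refine (norm_integral_smul_le_mul_add_mul_setIntegral_compl (integrable_fejerKernel hΛ)
    (fejerKernel_nonneg hΛ.le) measurableSet_Icc hM hφM hφS).trans ?_
  rw [integral_fejerKernel hΛ, one_mul]
  gcongr
  exact setIntegral_fejerKernel_compl_Icc_le hΛ hc

end FejerKernel

section ExpSum

variable {ι : Type*} {a : ι → ℂ} {lam : ι → ℝ}

/-- The generalized Fourier series `∑ aₙ e^{2πi λₙ x}` with frequencies `lam`; both `F` and `F₁`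
are of this form. -/
noncomputable def expSum (a : ι → ℂ) (lam : ι → ℝ) (x : ℝ) : ℂ :=
  ∑' n, a n * 𝐞 (lam n * x)

lemma expSum_eq_tsum_exp (a : ι → ℂ) (lam : ι → ℝ) (x : ℝ) :
    expSum a lam x = ∑' n, a n * Complex.exp (2 * π * Complex.I * lam n * x) := by
  refine tsum_congr fun n => ?_
  rw [Real.fourierChar_apply]
  push_cast
  ring_nf

lemma expSum_mul_tent_eq_tsum_exp (a : ι → ℂ) (lam : ι → ℝ) (Λ x : ℝ) :
    expSum (fun n => a n * tent Λ (lam n - Λ)) lam x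
      = ∑' n, a n * Complex.exp (2 * π * Complex.I * lam n * x) *
          ((max 0 (1 - |Λ - lam n| / Λ) : ℝ) : ℂ) := by
  rw [expSum_eq_tsum_exp]
  refine tsum_congr fun n => ?_
  rw [tent, abs_sub_comm, mul_right_comm]

lemma norm_expSum_le (ha : Summable a) (x : ℝ) : ‖expSum a lam x‖ ≤ ∑' n, ‖a n‖ :=
  tsum_of_norm_bounded ha.norm.hasSum fun n => by simp [Circle.norm_coe]

lemma continuous_expSum (ha : Summable a) : Continuous (expSum a lam) :=
  continuous_tsum (fun n => by fun_prop) ha.norm fun n x => by simp [Circle.norm_coe]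

lemma integrable_mul_fourierChar_mul_expSum {k : ℝ → ℂ} (hk : Integrable k)
    (ha : Summable a) (x ξ : ℝ) :
    Integrable fun u => k u * 𝐞 (ξ * u) * expSum a lam (x + u) :=
  (integrable_mul_fourierChar hk ξ).mul_bdd
    ((continuous_expSum ha).comp (continuous_const_add x)).aestronglyMeasurable
    (ae_of_all _ fun u => norm_expSum_le ha (x + u))

lemma integral_mul_fourierChar_mul_expSum [Countable ι] {k : ℝ → ℂ} (hk : Integrable k)
    (ha : Summable a) (x ξ : ℝ) :
    ∫ u, k u * 𝐞 (ξ * u) * expSum a lam (x + u)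
      = expSum (fun n => a n * 𝓕⁻ k (lam n + ξ)) lam x := by
  set G : ι → ℝ → ℂ := fun n u => a n * 𝐞 (lam n * x) * (k u * 𝐞 ((lam n + ξ) * u)) with hG
  have hGi : ∀ n, Integrable (G n) := fun n => (integrable_mul_fourierChar hk _).const_mul _
  have hGs : Summable fun n => ∫ u, ‖G n u‖ := by
    simpa [hG, Circle.norm_coe, integral_const_mul] using ha.norm.mul_right (∫ u, ‖k u‖)
  have hterm : ∀ u, ∑' n, G n u = k u * 𝐞 (ξ * u) * expSum a lam (x + u) := fun u => by
    rw [expSum, ← tsum_mul_left]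
    congr with n
    simp only [hG, mul_add, add_mul, AddChar.map_add_eq_mul, Circle.coe_mul]
    ring
  have hint : ∀ n, ∫ u, G n u = a n * 𝓕⁻ k (lam n + ξ) * 𝐞 (lam n * x) := fun n => by
    rw [integral_const_mul, Real.fourierInv_eq, mul_right_comm]
    simp [Circle.smul_def, mul_comm]
  simp_rw [← hterm, ← (hasSum_integral_of_summable_integral_norm hGi hGs).tsum_eq, hint, expSum]

lemma conj_expSum (a : ι → ℂ) (lam : ι → ℝ) (x : ℝ) :
    conj (expSum a lam x) = expSum (fun n => conj (a n)) (fun n => -lam n) x := by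
  simp only [expSum, Complex.conj_tsum, map_mul (starRingEnd ℂ), ← Circle.coe_inv_eq_conj,
    ← AddChar.map_neg_eq_inv, neg_mul]

lemma integral_fejerKernel_mul_fourierChar_mul_conj_expSum [Countable ι] (ha : Summable a)
    (hlam : ∀ n, 0 ≤ lam n) {Λ : ℝ} (hΛ : 0 < Λ) (x : ℝ) :
    ∫ u, (fejerKernel Λ u : ℂ) * 𝐞 (-Λ * u) * conj (expSum a lam (x + u)) = 0 := by
  have htent : ∀ n, tent Λ (-lam n + -Λ) = 0 := fun n =>
    tent_of_le_abs hΛ (le_abs.mpr (Or.inr (by linarith [hlam n])))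
  simp only [conj_expSum]
  refine (integral_mul_fourierChar_mul_expSum (integrable_fejerKernel hΛ).ofReal
    (Complex.summable_conj.mpr ha) x (-Λ)).trans ?_
  simp [fourierInv_fejerKernel hΛ, htent, expSum]

lemma integral_fejerKernel_mul_fourierChar_mul_re_expSum [Countable ι] (ha : Summable a)
    (hlam : ∀ n, 0 ≤ lam n) {Λ : ℝ} (hΛ : 0 < Λ) (c : ℂ) (x : ℝ) :
    ∫ u, (fejerKernel Λ u : ℂ) * 𝐞 (-Λ * u) * (c * expSum a lam (x + u)).re
      = c / 2 * expSum (fun n => a n * tent Λ (lam n - Λ)) lam x := by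
  have hk : Integrable fun u => (fejerKernel Λ u : ℂ) := (integrable_fejerKernel hΛ).ofReal
  have hi := integrable_mul_fourierChar_mul_expSum (lam := lam) hk ha x (-Λ)
  have hi' : Integrable fun u =>
      (fejerKernel Λ u : ℂ) * 𝐞 (-Λ * u) * conj (expSum a lam (x + u)) := by
    simpa only [conj_expSum] using
      integrable_mul_fourierChar_mul_expSum hk (Complex.summable_conj.mpr ha) x (-Λ)
  have hre : ∀ u, (fejerKernel Λ u : ℂ) * 𝐞 (-Λ * u) * (c * expSum a lam (x + u)).re
      = c / 2 * ((fejerKernel Λ u : ℂ) * 𝐞 (-Λ * u) * expSum a lam (x + u))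
        + conj c / 2 * ((fejerKernel Λ u : ℂ) * 𝐞 (-Λ * u) * conj (expSum a lam (x + u))) :=
    fun u => by
      rw [Complex.re_eq_add_conj, map_mul (starRingEnd ℂ)]
      ring
  simp_rw [hre]
  rw [integral_add (hi.const_mul _) (hi'.const_mul _), integral_const_mul, integral_const_mul,
    integral_fejerKernel_mul_fourierChar_mul_conj_expSum ha hlam hΛ,
    integral_mul_fourierChar_mul_expSum hk ha, mul_zero, add_zero]
  simp only [fourierInv_fejerKernel hΛ, sub_eq_add_neg]

end ExpSum

theorem max_near_ge_smoothed_general {ι : Type*} [Countable ι] {a : ι → ℂ} (ha : Summable a)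
    {lam : ι → ℝ} (hlam : ∀ n, 0 ≤ lam n) {Λ Y : ℝ} (hΛ : 0 < Λ) (hY : 0 < Y) (β x : ℝ) :
    (1 / 2) * ‖expSum (fun n => a n * tent Λ (lam n - Λ)) lam x‖
        - 4 * (∑' n, ‖a n‖) / (π ^ 2 * Y * Λ)
      ≤ sSup ((fun u => |(Complex.exp (Complex.I * β) * expSum a lam (x + u)).re|) ''
          Set.Icc (-(Y / 2)) (Y / 2)) := by
  set S := ∑' n, ‖a n‖
  set g : ℝ → ℝ := fun u => (Complex.exp (Complex.I * β) * expSum a lam (x + u)).re with hg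
  set M := sSup ((fun u => |g u|) '' Set.Icc (-(Y / 2)) (Y / 2))
  have hS : ∀ u, |g u| ≤ S := fun u => (Complex.abs_re_le_norm _).trans <| by
    simpa [Complex.norm_exp] using norm_expSum_le ha (x + u)
  have hM : ∀ u ∈ Set.Icc (-(Y / 2)) (Y / 2), |g u| ≤ M := fun u hu =>
    le_csSup ⟨S, Set.forall_mem_image.mpr fun v _ => hS v⟩ (Set.mem_image_of_mem _ hu)
  have hnorm : ∀ u, ‖𝐞 (-Λ * u) * (g u : ℂ)‖ = |g u| := fun u => by simp [Circle.norm_coe]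
  rw [sub_le_iff_le_add]
  calc (1 / 2) * ‖expSum (fun n => a n * tent Λ (lam n - Λ)) lam x‖
      = ‖∫ u, (fejerKernel Λ u : ℂ) * 𝐞 (-Λ * u) * g u‖ := by
        rw [hg, integral_fejerKernel_mul_fourierChar_mul_re_expSum ha hlam hΛ]
        simp [Complex.norm_exp]
    _ = ‖∫ u, fejerKernel Λ u • (𝐞 (-Λ * u) * (g u : ℂ))‖ := by
        simp only [Complex.real_smul, mul_assoc]
    _ ≤ M + 2 / (π ^ 2 * Λ * (Y / 2)) * S :=
        norm_integral_fejerKernel_smul_le hΛ (half_pos hY)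
          (fun u hu => (hnorm u).trans_le (hM u hu))
          (fun u _ => (hnorm u).trans_le (hS u))
    _ = M + 4 * S / (π ^ 2 * Y * Λ) := by
        field_simp
        ring

theorem max_near_ge_smoothed
    (lam : ℕ → ℝ) (hlam : ∀ n, 0 ≤ lam n)
    (f : ℕ → ℝ) (hf : ∀ n, 0 ≤ f n) (hsum : Summable f)
    (Λ : ℝ) (hΛ : 0 < Λ)
    (F F₁ : ℝ → ℂ)
    (hF : ∀ x : ℝ, F x = ∑' n : ℕ, (f n : ℂ) * Complex.exp (2 * π * Complex.I * lam n * x))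
    (hF₁ : ∀ x : ℝ, F₁ x = ∑' n : ℕ, (f n : ℂ) * Complex.exp (2 * π * Complex.I * lam n * x) *
        ((max 0 (1 - |Λ - lam n| / Λ) : ℝ) : ℂ))
    (Y : ℝ) (hY : 1 ≤ Y) (β : ℝ) (x : ℝ) :
    sSup ((fun u => |(Complex.exp (Complex.I * β) * F (x + u)).re|) '' Set.Icc (-(Y / 2)) (Y / 2))
      ≥ (1 / 2) * (F₁ x).re - 4 * (F 0).re / (π ^ 2 * Y * Λ) := by
  have hF' : F = expSum (fun n => (f n : ℂ)) lam :=
    funext fun y => (hF y).trans (expSum_eq_tsum_exp _ _ y).symm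
  have hF₁' : F₁ x = expSum (fun n => (f n : ℂ) * tent Λ (lam n - Λ)) lam x :=
    (hF₁ x).trans (expSum_mul_tent_eq_tsum_exp _ _ Λ x).symm
  have hF0 : (F 0).re = ∑' n, ‖(f n : ℂ)‖ := by
    simp [hF, ← Complex.ofReal_tsum, abs_of_nonneg (hf _)]
  rw [hF0, hF₁', hF', ge_iff_le]
  refine le_trans ?_ (max_near_ge_smoothed_general (Complex.summable_ofReal.mpr hsum) hlam hΛ
    (by linarith) β x)
  gcongr
  exact Complex.re_le_norm _
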